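/- Let X be a metric space homeomorphic to a closed topological disk, with manifold boundary ∂X. Let Ω ⊂ ℝ² be a closed Jordan domain, and suppose that for some L > 0 there exists an L-Lipschitz map f : ∂X → ∂Ω of non-zero topological degree. Then H²(X) ≥ (π/(4L²))·H²(Ω). -/

import Mathlib

open MeasureTheory Metric
open scoped NNReal ENNReal

/-!
STATEMENT 2: Besicovitch-type inequality.  If `X` is a metric space homeomorphic to a
closed topological disk with manifold boundary `∂X`, `Ω ⊂ ℝ²` is a closed Jordan domain,
and for some `L > 0` there is an `L`-Lipschitz map `f : ∂X → ∂Ω` of non-zero topological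
degree, then `H²(X) ≥ (π/(4L²))·H²(Ω)`.

Here `H²` is the Hausdorff 2-measure normalized (with the constant `π/4`) so that it
coincides with Lebesgue measure on the plane; we identify the plane `ℝ²` with `ℂ`.  The
manifold boundary of `X` is the image of the unit circle under a homeomorphism from the
closed unit disk onto `X` (this set is independent of the homeomorphism chosen).  A
continuous map between topological circles has non-zero degree if and only if it is not
null-homotopic, which is how we formalize the degree hypothesis.
-/

/-- The Hausdorff 2-measure, normalized so as to coincide with Lebesgue measure on `ℝ²`. -/
noncomputable def hausdorff2 (X : Type*) [MetricSpace X] [MeasurableSpace X] [BorelSpace X] :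
    Measure X := (ENNReal.ofReal (Real.pi / 4)) • MeasureTheory.Measure.hausdorffMeasure 2

/-!
By McShane's lemma, applied to each coordinate, `f : ∂X → ℂ` extends to a map on `X` that is
`L`-Lipschitz for the sup norm on `ℝ²`, for which `H²` without normalization is Lebesgue measure.
Since `∂X` is contractible in `X`, its image under the extension gives a null-homotopy of `f` in
`ℂ`. If this missed a point `z` of `U`, then `f - z` would have a continuous logarithm; because `J`
winds around `z`, `f` would then be null-homotopic in `J`. Hence the extension covers `U`, and being
a compact image also `closure U`, so the Lebesgue measure of `closure U` is at most `L²` times the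
unnormalized `H²` of `X`. The constant `π / 4` is the normalization of `H²` on `X`, while on `ℂ` the
normalized `H²` is at most Lebesgue measure by the Besicovitch covering theorem.
-/

open scoped unitInterval

/-- A continuous logarithm of `g : A → ℂ`: a lift of `g` through the covering
`Complex.exp : ℂ → ℂ \ {0}`. It exists for a map into `ℂ \ {0}` iff that map is
null-homotopic there, which is how winding numbers are handled below. -/
def HasContinuousLog {A : Type*} [TopologicalSpace A] (g : A → ℂ) : Prop :=
  ∃ G : A → ℂ, Continuous G ∧ ∀ a, Complex.exp (G a) = g a

namespace HasContinuousLog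

variable {A B : Type*} [TopologicalSpace A] [TopologicalSpace B] {g h : A → ℂ}

lemma comp (hg : HasContinuousLog g) {k : B → A} (hk : Continuous k) :
    HasContinuousLog (g ∘ k) := by
  obtain ⟨G, hG, hGg⟩ := hg
  exact ⟨G ∘ k, hG.comp hk, fun b => hGg (k b)⟩

lemma mul (hg : HasContinuousLog g) (hh : HasContinuousLog h) :
    HasContinuousLog (fun a => g a * h a) := by
  obtain ⟨G, hG, hGg⟩ := hg
  obtain ⟨K, hK, hKh⟩ := hh
  exact ⟨fun a => G a + K a, hG.add hK, fun a => by rw [Complex.exp_add, hGg, hKh]⟩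

lemma inv (hg : HasContinuousLog g) : HasContinuousLog (fun a => (g a)⁻¹) := by
  obtain ⟨G, hG, hGg⟩ := hg
  exact ⟨fun a => -G a, hG.neg, fun a => by rw [Complex.exp_neg, hGg]⟩

lemma const {c : ℂ} (hc : c ≠ 0) : HasContinuousLog (fun _ : A => c) :=
  ⟨fun _ => Complex.log c, continuous_const, fun _ => Complex.exp_log hc⟩

lemma of_finite_range (hg : Continuous g) (hg0 : ∀ a, g a ≠ 0) (hfin : (Set.range g).Finite) :
    HasContinuousLog g := by
  have : Finite (Set.range g) := hfin
  have hlog : Continuous fun w : Set.range g => Complex.log w := continuous_of_discreteTopology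
  exact ⟨fun a => Complex.log (g a), hlog.comp hg.rangeFactorization,
    fun a => Complex.exp_log (hg0 a)⟩

lemma of_pow (hg : Continuous g) {n : ℕ} (hn : n ≠ 0)
    (hpow : HasContinuousLog fun a => g a ^ n) : HasContinuousLog g := by
  obtain ⟨G, hG, hGg : ∀ a, Complex.exp (G a) = g a ^ n⟩ := hpow
  have hg0 (a : A) : g a ≠ 0 := fun h0 =>
    Complex.exp_ne_zero (G a) (by rw [hGg, h0, zero_pow hn])
  -- Dividing `g` by the `n`-th root `exp (G / n)` of `g ^ n` leaves a root of unity.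
  have hroot (a : A) : (g a * Complex.exp (-(G a / n))) ^ n = 1 := by
    rw [mul_pow, ← hGg, ← Complex.exp_nat_mul, ← Complex.exp_add]
    field_simp
    simp
  have hunit : HasContinuousLog fun a => g a * Complex.exp (-(G a / n)) := by
    refine of_finite_range (by fun_prop) (fun a => mul_ne_zero (hg0 a) (Complex.exp_ne_zero _)) ?_
    refine (Polynomial.nthRootsFinset n (1 : ℂ)).finite_toSet.subset ?_
    rintro _ ⟨a, rfl⟩
    exact (Polynomial.mem_nthRootsFinset (Nat.pos_of_ne_zero hn) 1).2 (hroot a)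
  have hexp : HasContinuousLog fun a => Complex.exp (G a / n) := ⟨_, by fun_prop, fun _ => rfl⟩
  simpa [mul_assoc, ← Complex.exp_add] using hunit.mul hexp

lemma of_zpow (hg : Continuous g) {m : ℤ} (hm : m ≠ 0)
    (hpow : HasContinuousLog fun a => g a ^ m) : HasContinuousLog g := by
  obtain ⟨n, rfl | rfl⟩ := m.eq_nat_or_neg
  · exact of_pow hg (by simpa using hm) (by simpa using hpow)
  · exact of_pow hg (by simpa using hm) (by simpa using hpow.inv)

lemma of_homotopy {K : I × A → ℂ} (hK : Continuous K) (hK0 : ∀ p, K p ≠ 0)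
    (hlog : HasContinuousLog fun a => K (0, a)) : HasContinuousLog fun a => K (1, a) := by
  obtain ⟨G, hG, hGK⟩ := hlog
  let K' : C(I × A, {w : ℂ // w ≠ 0}) := ⟨fun p => ⟨K p, hK0 p⟩, by fun_prop⟩
  let Γ := Complex.isCoveringMap_exp.liftHomotopy K' ⟨G, hG⟩ fun a => Subtype.ext (hGK a).symm
  have hΓ (p : I × A) : Complex.exp (Γ p) = K p :=
    congrArg Subtype.val (congrFun (Complex.isCoveringMap_exp.liftHomotopy_lifts K' ⟨G, hG⟩ _) p)
  exact ⟨fun a => Γ (1, a), by fun_prop, fun a => hΓ (1, a)⟩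

lemma of_contractibleSpace [ContractibleSpace A] (hg : Continuous g) (hg0 : ∀ a, g a ≠ 0) :
    HasContinuousLog g := by
  obtain ⟨x, ⟨K⟩⟩ := id_nullhomotopic A
  simpa using of_homotopy (K := fun p => g (K.symm p)) (by fun_prop) (fun p => hg0 _)
    (by simpa using const (hg0 x))

end HasContinuousLog

lemma exists_int_eq_add_of_exp_eq {A : Type*} [TopologicalSpace A] [ConnectedSpace A]
    {p q : A → ℂ} (hp : Continuous p) (hq : Continuous q)
    (h : ∀ a, Complex.exp (p a) = Complex.exp (q a)) :
    ∃ n : ℤ, ∀ a, p a = q a + n * (2 * Real.pi * Complex.I) := by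
  obtain ⟨a₀⟩ : Nonempty A := inferInstance
  obtain ⟨n, hn⟩ := Complex.exp_eq_exp_iff_exists_int.1 (h a₀)
  refine ⟨n, congrFun (Complex.isCoveringMap_exp.eq_of_comp_eq hp (by fun_prop) ?_ a₀ hn)⟩
  funext a
  exact Subtype.ext ((h a).trans (Complex.exp_periodic.int_mul n (q a)).symm)

lemma exists_hasContinuousLog_zpow_div {H : Circle → ℂ} (hH : Continuous H) (hH0 : ∀ w, H w ≠ 0) :
    ∃ m : ℤ, HasContinuousLog fun w : Circle => (w : ℂ) ^ m / H w := by
  obtain ⟨η, hη, hηH : ∀ t, Complex.exp (η t) = H (Circle.exp t)⟩ :=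
    HasContinuousLog.of_contractibleSpace (g := fun t : ℝ => H (Circle.exp t)) (by fun_prop)
      (fun t => hH0 _)
  obtain ⟨m, hm⟩ := exists_int_eq_add_of_exp_eq (p := fun t => η (t + 2 * Real.pi)) (q := η)
    (by fun_prop) hη (fun t => by rw [hηH, hηH, Circle.exp_add_two_pi])
  let p : C(ℝ, ℂ) := ⟨fun t => m * (t * Complex.I) - η t, by fun_prop⟩
  have hp : Function.Periodic p (2 * Real.pi) := fun t => by
    simp only [p, ContinuousMap.coe_mk, hm]
    push_cast
    ring
  have hfactor : Function.FactorsThrough p Circle.exp := fun s t hst => by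
    obtain ⟨n, rfl⟩ := Circle.exp_eq_exp.1 hst
    exact hp.int_mul n t
  have hquot := Circle.isAddQuotientCoveringMap_exp.toIsQuotientMap
  refine ⟨m, hquot.lift p hfactor, map_continuous _, fun w => ?_⟩
  obtain ⟨t, rfl⟩ := hquot.surjective w
  calc Complex.exp (hquot.lift p hfactor (Circle.exp t)) = Complex.exp (p t) :=
        congrArg Complex.exp (DFunLike.congr_fun (hquot.lift_comp p hfactor) t)
    _ = (Circle.exp t : ℂ) ^ m / H (Circle.exp t) := by
        rw [Circle.coe_exp, ← Complex.exp_int_mul, ← hηH, ← Complex.exp_sub]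
        rfl

lemma nullhomotopic_of_hasContinuousLog {A : Type*} [TopologicalSpace A] {k : C(A, Circle)}
    (hk : HasContinuousLog fun a => (k a : ℂ)) : k.Nullhomotopic := by
  obtain ⟨G, hG, hGk : ∀ a, Complex.exp (G a) = k a⟩ := hk
  let θ : C(A, ℝ) := ⟨fun a => (G a).im, by fun_prop⟩
  have hθ : Circle.exp.comp θ = k := by
    refine ContinuousMap.ext fun a => Circle.ext ?_
    have hre : (G a).re = 0 := by
      rw [← Real.exp_eq_one_iff, ← Complex.norm_exp, hGk, Circle.norm_coe]
    rw [← hGk a, ← Complex.re_add_im (G a), hre]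
    simp [θ]
  rw [← hθ]
  exact ((id_nullhomotopic ℝ).comp_left θ).comp_right Circle.exp

lemma nullhomotopic_of_hasContinuousLog_comp {A : Type*} [TopologicalSpace A] {H : Circle → ℂ}
    (hH : Continuous H) (hH0 : ∀ w, H w ≠ 0) (hHlog : ¬ HasContinuousLog H) {k : C(A, Circle)}
    (hlog : HasContinuousLog (H ∘ k)) : k.Nullhomotopic := by
  obtain ⟨m, hm⟩ := exists_hasContinuousLog_zpow_div hH hH0
  have hm0 : m ≠ 0 := by
    rintro rfl
    exact hHlog (by simpa using hm.inv)
  have hpow : HasContinuousLog fun a => (k a : ℂ) ^ m := by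
    simpa [mul_div_cancel₀ _ (hH0 _)] using hlog.mul (hm.comp k.continuous)
  exact nullhomotopic_of_hasContinuousLog (.of_zpow (by fun_prop) hm0 hpow)

lemma not_hasContinuousLog_circle_coe : ¬ HasContinuousLog fun w : Circle => (w : ℂ) := by
  rintro ⟨G, hG, hGw⟩
  obtain ⟨n, hn⟩ := exists_int_eq_add_of_exp_eq (p := fun t => G (Circle.exp t))
    (q := fun t : ℝ => t * Complex.I) (by fun_prop) (by fun_prop)
    (fun t => by simp only [hGw, Circle.coe_exp])
  have h0 := hn 0
  have h2π := hn (2 * Real.pi)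
  rw [Circle.exp_two_pi, ← Circle.exp_zero, h0] at h2π
  simp [Real.pi_ne_zero] at h2π

lemma frontier_connectedComponentIn_subset {X : Type*} [TopologicalSpace X]
    [LocallyConnectedSpace X] {s : Set X} (hs : IsOpen s) (x : X) :
    frontier (connectedComponentIn s x) ⊆ sᶜ := by
  intro y hy hys
  obtain ⟨w, hwy, hwx⟩ := mem_closure_iff.1 hy.1 _ hs.connectedComponentIn
    (mem_connectedComponentIn hys)
  refine (hs.connectedComponentIn.frontier_eq ▸ hy).2 ?_
  rw [connectedComponentIn_eq hwx, ← connectedComponentIn_eq hwy]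
  exact mem_connectedComponentIn hys

lemma not_hasContinuousLog_sub_of_eqOn_compl {q : ℂ → ℂ} (hq : Continuous q) (hq0 : ∀ x, q x ≠ 0)
    {U : Set ℂ} (hU : Bornology.IsBounded U) (z : ℂ) : ¬ Set.EqOn q (fun x => x - z) Uᶜ := by
  intro hqU
  obtain ⟨R, hRpos, hR⟩ := hU.subset_ball_lt 0 z
  have hmem (w : Circle) : z + R * w ∈ Uᶜ := fun hw => by
    simpa [abs_of_pos hRpos, Circle.norm_coe] using hR hw
  have hlog := (HasContinuousLog.of_contractibleSpace hq hq0).comp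
    (k := fun w : Circle => z + R * w) (by fun_prop)
  have hR0 : (R : ℂ) ≠ 0 := by exact_mod_cast hRpos.ne'
  refine not_hasContinuousLog_circle_coe ?_
  simpa [Function.comp_def, fun w => hqU (hmem w), hR0] using
    (HasContinuousLog.const hR0).inv.mul hlog

lemma not_hasContinuousLog_sub {J : Set ℂ} (hJ : IsClosed J) {z z₀ : ℂ}
    (hbdd : Bornology.IsBounded (connectedComponentIn Jᶜ z₀))
    (hz : z ∈ connectedComponentIn Jᶜ z₀) : ¬ HasContinuousLog fun x : J => (x : ℂ) - z := by
  classical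
  rintro ⟨g, hg, hgJ⟩
  obtain ⟨G, hG⟩ := ContinuousMap.exists_restrict_eq hJ (⟨g, hg⟩ : C(J, ℂ))
  have hGJ (x : ℂ) (hx : x ∈ J) : Complex.exp (G x) = x - z :=
    (congrArg Complex.exp (DFunLike.congr_fun hG ⟨x, hx⟩)).trans (hgJ ⟨x, hx⟩)
  set U := connectedComponentIn Jᶜ z₀
  have hfrontier : frontier U ⊆ J := by
    simpa using frontier_connectedComponentIn_subset hJ.isOpen_compl z₀
  -- A logarithm of `x - z` on `J`, extended over `U`, removes the zero of `x - z` at `z`.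
  let q : ℂ → ℂ := U.piecewise (fun x => Complex.exp (G x)) (fun x => x - z)
  have hq : Continuous q :=
    Continuous.piecewise (fun x hx => hGJ x (hfrontier hx)) (by fun_prop) (by fun_prop)
  have hq0 (x : ℂ) : q x ≠ 0 := by
    by_cases hx : x ∈ U
    · simp [q, hx, Complex.exp_ne_zero]
    · simpa [q, hx, sub_eq_zero] using fun hxz : x = z => hx (hxz ▸ hz)
  exact not_hasContinuousLog_sub_of_eqOn_compl hq hq0 hbdd z (Set.piecewise_eqOn_compl _ _ _)

lemma nullhomotopic_of_hasContinuousLog_sub {A : Type*} [TopologicalSpace A] {J : Set ℂ}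
    (e : Circle ≃ₜ J) {z z₀ : ℂ} (hbdd : Bornology.IsBounded (connectedComponentIn Jᶜ z₀))
    (hz : z ∈ connectedComponentIn Jᶜ z₀) {f : C(A, J)}
    (hlog : HasContinuousLog fun a => (f a : ℂ) - z) : f.Nullhomotopic := by
  have hJ : IsClosed J :=
    (isCompact_iff_compactSpace.2 e.compactSpace).isClosed
  have he0 (w : Circle) : (e w : ℂ) - z ≠ 0 := fun hw =>
    connectedComponentIn_subset _ _ hz (sub_eq_zero.1 hw ▸ (e w).2)
  have helog : ¬ HasContinuousLog fun w => (e w : ℂ) - z := fun h =>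
    not_hasContinuousLog_sub hJ hbdd hz
      (by simpa [Function.comp_def] using h.comp e.symm.continuous)
  have hnull := nullhomotopic_of_hasContinuousLog_comp (by fun_prop) he0 helog
    (k := (e.symm : C(J, Circle)).comp f) (by simpa [Function.comp_def] using hlog)
  simpa [← ContinuousMap.comp_assoc] using hnull.comp_right (e : C(Circle, J))

theorem connectedComponentIn_subset_range_of_homotopy {A : Type*} [TopologicalSpace A] {J : Set ℂ}
    (e : Circle ≃ₜ J) {z₀ : ℂ} (hbdd : Bornology.IsBounded (connectedComponentIn Jᶜ z₀))
    {f : C(A, J)} (hf : ¬ f.Nullhomotopic) {K : I × A → ℂ} (hK : Continuous K) {c : ℂ}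
    (hK0 : ∀ a, K (0, a) = c) (hK1 : ∀ a, K (1, a) = f a) :
    connectedComponentIn Jᶜ z₀ ⊆ Set.range K := by
  intro z hz
  by_contra hzK
  have hne (p : I × A) : K p - z ≠ 0 := fun hp => hzK ⟨p, sub_eq_zero.1 hp⟩
  have hlog0 : HasContinuousLog fun a => K (0, a) - z :=
    ⟨fun _ => Complex.log (c - z), continuous_const, fun a => by
      rw [← hK0 a, Complex.exp_log (hne (0, a))]⟩
  have hlog : HasContinuousLog fun a => (f a : ℂ) - z := by
    simpa only [hK1] using
      HasContinuousLog.of_homotopy (K := fun p => K p - z) (by fun_prop) hne hlog0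
  exact hf (nullhomotopic_of_hasContinuousLog_sub e hbdd hz hlog)

lemma ediam_closedBall_le_two_mul_ofReal {X : Type*} [PseudoMetricSpace X] {x : X} {r : ℝ}
    (hr : 0 ≤ r) : ediam (closedBall x r) ≤ 2 * ENNReal.ofReal r := by
  rw [← closedEBall_ofReal hr]
  exact ediam_closedEBall_le

section HausdorffDensity

variable {X : Type*} [MetricSpace X] [SecondCountableTopology X] [HasBesicovitchCovering X]
  [MeasurableSpace X] [BorelSpace X] {μ : Measure X} [SFinite μ] [μ.OuterRegular]
  {d : ℝ} {C : ℝ≥0∞}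

lemma exists_closedBall_covering_tsum_ediam_rpow_le
    (hμ : ∀ x, ∀ r > 0, ediam (closedBall x r) ^ d ≤ C * μ (closedBall x r)) (s : Set X)
    {ε : ℝ≥0∞} (hε : ε ≠ 0) {δ : ℝ} (hδ : 0 < δ) :
    ∃ (t : Set X) (r : X → ℝ), t.Countable ∧ (∀ x ∈ t, r x < δ) ∧
      s ⊆ ⋃ x : t, closedBall (x : X) (r x) ∧
      ∑' x : t, ediam (closedBall (x : X) (r x)) ^ d ≤ C * (μ s + ε) := by
  obtain ⟨t, r, ht, -, hr, hst, hsum⟩ := Besicovitch.exists_closedBall_covering_tsum_measure_le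
    μ hε (fun _ => Set.Ioo 0 δ) s fun x _ η hη => by
      simpa [Set.Ioo_inter_Ioo] using ⟨hδ, hη⟩
  rw [Set.biUnion_eq_iUnion t fun x _ => closedBall x (r x)] at hst
  refine ⟨t, r, ht, fun x hx => (hr x hx).2, hst, ?_⟩
  calc ∑' x : t, ediam (closedBall (x : X) (r x)) ^ d
      ≤ ∑' x : t, C * μ (closedBall (x : X) (r x)) :=
        ENNReal.tsum_le_tsum fun x => hμ x _ (hr x x.2).1
    _ = C * ∑' x : t, μ (closedBall (x : X) (r x)) := ENNReal.tsum_mul_left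
    _ ≤ C * (μ s + ε) := by gcongr

theorem hausdorffMeasure_le_mul_of_ediam_closedBall_rpow_le (hC : C ≠ ∞)
    (hμ : ∀ x, ∀ r > 0, ediam (closedBall x r) ^ d ≤ C * μ (closedBall x r)) (s : Set X) :
    μH[d] s ≤ C * μ s := by
  have hδ (n : ℕ) : (0 : ℝ) < 1 / (n + 1) := Nat.one_div_pos_of_nat
  choose t r ht hr hst hsum using fun n : ℕ =>
    exists_closedBall_covering_tsum_ediam_rpow_le hμ s
      (ENNReal.inv_ne_zero.2 (ENNReal.natCast_ne_top n)) (hδ n)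
  have (n : ℕ) : Countable (t n) := (ht n).to_subtype
  have hdiam (n : ℕ) (x : t n) :
      ediam (closedBall (x : X) (r n x)) ≤ 2 * ENNReal.ofReal (1 / (n + 1)) :=
    (ediam_mono (closedBall_subset_closedBall (hr n x x.2).le)).trans
      (ediam_closedBall_le_two_mul_ofReal (hδ n).le)
  have hdiam_lim : Filter.Tendsto (fun n : ℕ => 2 * ENNReal.ofReal (1 / (n + 1))) Filter.atTop
      (nhds 0) := by
    simpa using ENNReal.Tendsto.const_mul (a := 2)
      (ENNReal.tendsto_ofReal (tendsto_one_div_add_atTop_nhds_zero_nat (𝕜 := ℝ))) (by simp)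
  have hbound_lim : Filter.Tendsto (fun n : ℕ => C * (μ s + (n : ℝ≥0∞)⁻¹)) Filter.atTop
      (nhds (C * μ s)) := by
    simpa using ENNReal.Tendsto.const_mul
      (ENNReal.tendsto_inv_nat_nhds_zero.const_add (μ s)) (Or.inr hC)
  calc μH[d] s
      ≤ Filter.liminf (fun n => ∑' x : t n, ediam (closedBall (x : X) (r n x)) ^ d)
          Filter.atTop :=
        Measure.hausdorffMeasure_le_liminf_tsum d s _ hdiam_lim _ (.of_forall hdiam)
          (.of_forall hst)
    _ ≤ Filter.liminf (fun n : ℕ => C * (μ s + (n : ℝ≥0∞)⁻¹)) Filter.atTop :=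
        Filter.liminf_le_liminf (.of_forall hsum)
    _ = C * μ s := hbound_lim.liminf_eq

end HausdorffDensity

lemma hausdorff2_complex_le_volume (s : Set ℂ) : hausdorff2 ℂ s ≤ volume s := by
  have hball (x : ℂ) (r : ℝ) (hr : r > 0) : ediam (closedBall x r) ^ (2 : ℝ) ≤
      ENNReal.ofReal (4 / Real.pi) * volume (closedBall x r) := by
    calc ediam (closedBall x r) ^ (2 : ℝ) ≤ (2 * ENNReal.ofReal r) ^ (2 : ℝ) := by
          gcongr
          exact ediam_closedBall_le_two_mul_ofReal hr.le
      _ = ENNReal.ofReal ((2 * r) ^ 2) := by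
          rw [ENNReal.rpow_two, ENNReal.ofReal_pow (by positivity),
            ENNReal.ofReal_mul zero_le_two, ENNReal.ofReal_ofNat]
      _ = ENNReal.ofReal (4 / Real.pi * (r ^ 2 * Real.pi)) := by
          congr 1
          field_simp
          norm_num
      _ = ENNReal.ofReal (4 / Real.pi) * volume (closedBall x r) := by
          rw [Complex.volume_closedBall, ← ENNReal.ofReal_coe_nnreal, NNReal.coe_real_pi,
            ← ENNReal.ofReal_pow hr.le, ← ENNReal.ofReal_mul (by positivity),
            ← ENNReal.ofReal_mul (by positivity)]
  calc hausdorff2 ℂ s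
      ≤ ENNReal.ofReal (Real.pi / 4) * (ENNReal.ofReal (4 / Real.pi) * volume s) := by
        rw [hausdorff2, Measure.smul_apply, smul_eq_mul]
        gcongr
        exact hausdorffMeasure_le_mul_of_ediam_closedBall_rpow_le ENNReal.ofReal_ne_top hball s
    _ = volume s := by
        rw [← mul_assoc, ← ENNReal.ofReal_mul (by positivity)]
        field_simp
        simp

lemma exists_lipschitzWith_comp_eq {A X : Type*} [PseudoMetricSpace X] {γ : A → X}
    {f : A → ℝ} {L : ℝ≥0}
    (hf : ∀ a b, dist (f a) (f b) ≤ L * dist (γ a) (γ b)) :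
    ∃ F : X → ℝ, LipschitzWith L F ∧ ∀ a, F (γ a) = f a := by
  have hfactor : f.FactorsThrough γ := fun a b hab => by
    simpa [hab] using hf a b
  have hlip : LipschitzOnWith L (Function.extend γ f 0) (Set.range γ) := by
    refine LipschitzOnWith.of_dist_le_mul ?_
    rintro _ ⟨a, rfl⟩ _ ⟨b, rfl⟩
    simpa only [hfactor.extend_apply] using hf a b
  obtain ⟨F, hF, hFf⟩ := hlip.extend_real
  exact ⟨F, hF, fun a => by rw [← hFf ⟨a, rfl⟩, hfactor.extend_apply]⟩

lemma exists_lipschitzWith_equivRealProd_comp_eq {A X : Type*} [PseudoMetricSpace X] {γ : A → X}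
    {f : A → ℂ} {L : ℝ≥0} (hf : ∀ a b, dist (f a) (f b) ≤ L * dist (γ a) (γ b)) :
    ∃ F : X → ℂ, LipschitzWith L (Complex.equivRealProd ∘ F) ∧ ∀ a, F (γ a) = f a := by
  have hprod (a b : A) : dist (Complex.equivRealProd (f a)) (Complex.equivRealProd (f b)) ≤
      L * dist (γ a) (γ b) := by
    simpa using (Complex.lipschitz_equivRealProd.dist_le_mul _ _).trans (by simpa using hf a b)
  obtain ⟨F₁, hF₁, hF₁f⟩ :=
    exists_lipschitzWith_comp_eq fun a b => (le_max_left _ _).trans (hprod a b)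
  obtain ⟨F₂, hF₂, hF₂f⟩ :=
    exists_lipschitzWith_comp_eq fun a b => (le_max_right _ _).trans (hprod a b)
  refine ⟨fun x => ⟨F₁ x, F₂ x⟩, ?_, fun a => Complex.ext (hF₁f a) (hF₂f a)⟩
  simpa [Function.comp_def] using hF₁.prodMk hF₂

lemma volume_image_le_of_lipschitzWith_equivRealProd {X : Type*} [MetricSpace X]
    [MeasurableSpace X] [BorelSpace X] {F : X → ℂ} {L : ℝ≥0}
    (hF : LipschitzWith L (Complex.equivRealProd ∘ F)) (s : Set X) :
    volume (F '' s) ≤ (L : ℝ≥0∞) ^ 2 * μH[2] s := by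
  calc volume (F '' s)
      = volume ((Complex.equivRealProd ∘ F) '' s) := by
        rw [Set.image_comp, ← Complex.volume_preserving_equiv_real_prod.measure_preimage_equiv]
        exact congrArg volume (Complex.equivRealProd.injective.preimage_image _).symm
    _ = μH[2] ((Complex.equivRealProd ∘ F) '' s) := by rw [hausdorffMeasure_prod_real]
    _ ≤ (L : ℝ≥0∞) ^ 2 * μH[2] s := by
        simpa using hF.hausdorffMeasure_image_le zero_le_two s

theorem volume_closure_connectedComponentIn_le {A X : Type*} [TopologicalSpace A]
    [CompactSpace A] [MetricSpace X] [MeasurableSpace X] [BorelSpace X] {J : Set ℂ}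
    (e : Circle ≃ₜ J) {z₀ : ℂ} (hbdd : Bornology.IsBounded (connectedComponentIn Jᶜ z₀))
    {γ : C(A, X)} (hγ : γ.Nullhomotopic) {L : ℝ≥0} {f : C(A, J)}
    (hf : ∀ a b, dist (f a) (f b) ≤ L * dist (γ a) (γ b)) (hdeg : ¬ f.Nullhomotopic) :
    volume (closure (connectedComponentIn Jᶜ z₀)) ≤
      (L : ℝ≥0∞) ^ 2 * μH[2] (Set.univ : Set X) := by
  obtain ⟨F, hF, hFf⟩ := exists_lipschitzWith_equivRealProd_comp_eq (f := fun a => (f a : ℂ)) hf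
  obtain ⟨x, ⟨K⟩⟩ := hγ
  have hFcont : Continuous F :=
    Complex.isUniformEmbedding_equivRealProd.isEmbedding.continuous_iff.2 hF.continuous
  have hFK : Continuous (F ∘ K.symm) := by fun_prop
  have hcover : connectedComponentIn Jᶜ z₀ ⊆ Set.range (F ∘ K.symm) :=
    connectedComponentIn_subset_range_of_homotopy e hbdd hdeg hFK (c := F x)
      (fun a => by simp) (fun a => by simp [hFf])
  calc volume (closure (connectedComponentIn Jᶜ z₀))
      ≤ volume (Set.range (F ∘ K.symm)) := measure_mono
        (closure_minimal hcover (isCompact_range hFK).isClosed)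
    _ ≤ volume (F '' Set.univ) := measure_mono (by
        rw [Set.image_univ]
        exact Set.range_comp_subset_range _ _)
    _ ≤ (L : ℝ≥0∞) ^ 2 * μH[2] Set.univ := volume_image_le_of_lipschitzWith_equivRealProd hF _

theorem besicovitch_inequality_general {A X : Type*} [TopologicalSpace A] [CompactSpace A]
    [MetricSpace X] [MeasurableSpace X] [BorelSpace X] {J : Set ℂ} (e : Circle ≃ₜ J) {z₀ : ℂ}
    (hbdd : Bornology.IsBounded (connectedComponentIn Jᶜ z₀)) {γ : C(A, X)}
    (hγ : γ.Nullhomotopic) {L : ℝ≥0} (hL : 0 < L) {f : C(A, J)}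
    (hf : ∀ a b, dist (f a) (f b) ≤ L * dist (γ a) (γ b)) (hdeg : ¬ f.Nullhomotopic) :
    ENNReal.ofReal (Real.pi / (4 * (L : ℝ) ^ 2)) *
      hausdorff2 ℂ (closure (connectedComponentIn Jᶜ z₀)) ≤ hausdorff2 X Set.univ := by
  have hL' : (0 : ℝ) < L := hL
  calc ENNReal.ofReal (Real.pi / (4 * (L : ℝ) ^ 2)) *
        hausdorff2 ℂ (closure (connectedComponentIn Jᶜ z₀))
      ≤ ENNReal.ofReal (Real.pi / (4 * (L : ℝ) ^ 2)) *
          ((L : ℝ≥0∞) ^ 2 * μH[2] (Set.univ : Set X)) := by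
        gcongr
        exact (hausdorff2_complex_le_volume _).trans
          (volume_closure_connectedComponentIn_le e hbdd hγ hf hdeg)
    _ = ENNReal.ofReal (Real.pi / 4) * μH[2] (Set.univ : Set X) := by
        rw [← mul_assoc, ← ENNReal.ofReal_coe_nnreal, ← ENNReal.ofReal_pow hL'.le,
          ← ENNReal.ofReal_mul (by positivity)]
        field_simp
    _ = hausdorff2 X Set.univ := rfl

theorem besicovitch_inequality
    {X : Type*} [MetricSpace X] [MeasurableSpace X] [BorelSpace X]
    -- `X` is homeomorphic to a closed topological disk, via `φ`:
    (φ : ↥(Metric.closedBall (0 : ℂ) 1) ≃ₜ X)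
    -- `J` is a Jordan curve in the plane:
    (J : Set ℂ) (hJ : Nonempty (↥(Metric.sphere (0 : ℂ) 1) ≃ₜ ↥J))
    -- `Ω` is the closed Jordan domain bounded by `J`: the closure of the bounded
    -- complementary component `U` of `J`, with topological boundary `∂Ω = J`:
    (U Ω : Set ℂ)
    (hU : ∃ z ∈ Jᶜ, U = connectedComponentIn Jᶜ z)
    (hUbdd : Bornology.IsBounded U)
    (hΩ : Ω = closure U)
    (hbd : frontier Ω = J)
    -- `f : ∂X → ∂Ω = J` is `L`-Lipschitz of non-zero degree:
    (L : ℝ≥0) (hL : 0 < L)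
    (f : ↥(φ '' {x : ↥(Metric.closedBall (0 : ℂ) 1) | ‖(x : ℂ)‖ = 1}) → ↥J)
    (hf : LipschitzWith L f)
    (hdeg : ¬ (ContinuousMap.mk f hf.continuous).Nullhomotopic) :
    ENNReal.ofReal (Real.pi / (4 * (L : ℝ) ^ 2)) * hausdorff2 ℂ Ω ≤
      hausdorff2 X Set.univ := by
  obtain ⟨e⟩ := hJ
  obtain ⟨z₀, -, rfl⟩ := hU
  subst hΩ
  have : CompactSpace (closedBall (0 : ℂ) 1) :=
    isCompact_iff_compactSpace.1 (isCompact_closedBall 0 1)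
  have : ContractibleSpace (closedBall (0 : ℂ) 1) :=
    (convex_closedBall (0 : ℂ) 1).contractibleSpace ⟨0, by simp⟩
  have : ContractibleSpace X := φ.symm.contractibleSpace
  have : CompactSpace (φ '' {x | ‖(x : ℂ)‖ = 1}) := isCompact_iff_compactSpace.1
    ((isClosed_eq (by fun_prop) continuous_const).isCompact.image φ.continuous)
  exact besicovitch_inequality_general e hUbdd
    ((id_nullhomotopic X).comp_left ⟨Subtype.val, continuous_subtype_val⟩) hL
    (f := ⟨f, hf.continuous⟩) hf.dist_le_mul hdeg
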